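/- arXiv:1402.2500 — 2 statements merged into one kernel-verified Lean document; each statement's English description precedes it below -/
import Mathlib

section
/- Let (W,T) be a dual Coxeter system of finite rank, let c be a parabolic Coxeter element, and let W_c = ⟨t1,…,tn⟩ for any reduced reflection factorization c = t1⋯tn. Then Red_T(c) = Red_{T'}(c), where T' = W_c ∩ T: every minimal-length factorization of c into reflections uses only reflections lying in W_c. -/
/-- The reflection length `ℓ_T` of `w`: the minimal length of a factorization of `w`
into reflections. -/
noncomputable def reflLength {B : Type*} {W : Type*} [Group W] {M : CoxeterMatrix B}
    (cs : CoxeterSystem M W) (w : W) : ℕ :=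
  sInf {n | ∃ l : List W, (∀ t ∈ l, cs.IsReflection t) ∧ l.prod = w ∧ l.length = n}

/-- `Red T' w`: the set of minimal-length factorizations of `w` into elements of `T'`. -/
def Red {W : Type*} [Group W] (T' : Set W) (w : W) : Set (List W) :=
  {l | (∀ t ∈ l, t ∈ T') ∧ l.prod = w ∧
    ∀ l' : List W, (∀ t ∈ l', t ∈ T') → l'.prod = w → l.length ≤ l'.length}

/-! Hurwitz moves `(a, b) ↦ (a b a⁻¹, a)` preserve the product, the length and the generated
subgroup of a factorization, so it suffices that they act transitively on the reduced reflection
factorizations of `c = s₁ ⋯ sₙ`; following Dyer, each of these is Hurwitz equivalent to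
`(s₁, …, sₙ)`, by induction on the number of factors.

The key step moves some left inversion of `c` to the front of a given factorization. Suppose its
first entry `t` is not an inversion of `c`; then `t` is an inversion of the tail product `y`, and by
induction on the number of factors the tail can be assumed to begin with an inversion `t'` of `y`.
The dihedral group `⟨t, t'⟩` has a canonical reflection, having no inversion in the group but
itself, which prevents `y` from being shortest in its coset `⟨t t'⟩ y`; so rotating the first two
entries shortens the tail product, and the process terminates. Once the first entry is an inversion
of `c`, strong exchange writes it as a letter of the word `s₁ ⋯ sₙ` moved to the front by Hurwitz
moves, and one compares the tails. When no factors remain, the word is empty because the geometric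
representation shows that no simple reflection lies in the subgroup generated by the others. -/

section Hurwitz

variable {G : Type*} [Group G]

/-- Hurwitz equivalence of lists of group elements: the orbit relation of the Hurwitz action of the
braid group, whose generators replace two consecutive entries `a, b` by `a * b * a⁻¹, a`. As for
`List.Perm`, such moves deeper in the list are obtained from `cons`. -/
inductive HurwitzEquiv : List G → List G → Prop
  | refl (l : List G) : HurwitzEquiv l l
  | symm {l l' : List G} : HurwitzEquiv l l' → HurwitzEquiv l' l
  | trans {l l' l'' : List G} : HurwitzEquiv l l' → HurwitzEquiv l' l'' → HurwitzEquiv l l''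
  | swap (a b : G) (l : List G) : HurwitzEquiv (a :: b :: l) (a * b * a⁻¹ :: a :: l)
  | cons (a : G) {l l' : List G} : HurwitzEquiv l l' → HurwitzEquiv (a :: l) (a :: l')

namespace HurwitzEquiv

variable {l l' : List G}

theorem prod_eq (h : HurwitzEquiv l l') : l.prod = l'.prod := by
  induction h with
  | refl => rfl
  | symm _ ih => exact ih.symm
  | trans _ _ ih ih' => exact ih.trans ih'
  | swap => simp [mul_assoc]
  | cons _ _ ih => rw [List.prod_cons, List.prod_cons, ih]

theorem length_eq (h : HurwitzEquiv l l') : l.length = l'.length := by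
  induction h with
  | refl => rfl
  | symm _ ih => exact ih.symm
  | trans _ _ ih ih' => exact ih.trans ih'
  | swap => rfl
  | cons _ _ ih => rw [List.length_cons, List.length_cons, ih]

theorem forall_mem_iff {S : Set G} (hS : ∀ a ∈ S, ∀ b, a * b * a⁻¹ ∈ S ↔ b ∈ S)
    (h : HurwitzEquiv l l') : (∀ t ∈ l, t ∈ S) ↔ ∀ t ∈ l', t ∈ S := by
  induction h with
  | refl => rfl
  | symm _ ih => exact ih.symm
  | trans _ _ ih ih' => exact ih.trans ih'
  | swap a b l =>
    simp only [List.forall_mem_cons]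
    constructor
    · rintro ⟨ha, hb, hl⟩
      exact ⟨(hS a ha b).mpr hb, ha, hl⟩
    · rintro ⟨hab, ha, hl⟩
      exact ⟨ha, (hS a ha b).mp hab, hl⟩
  | cons _ _ ih => rw [List.forall_mem_cons, List.forall_mem_cons, ih]

theorem closure_le (h : HurwitzEquiv l l') :
    Subgroup.closure {t | t ∈ l} ≤ Subgroup.closure {t | t ∈ l'} := by
  have hconj : ∀ a ∈ Subgroup.closure {t | t ∈ l'}, ∀ b,
      a * b * a⁻¹ ∈ Subgroup.closure {t | t ∈ l'} ↔ b ∈ Subgroup.closure {t | t ∈ l'} :=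
    fun a ha b => by
      rw [Subgroup.mul_mem_cancel_right _ (inv_mem ha), Subgroup.mul_mem_cancel_left _ ha]
  exact (Subgroup.closure_le _).mpr
    ((h.forall_mem_iff hconj).mpr fun _ ht => Subgroup.subset_closure ht)

theorem closure_eq (h : HurwitzEquiv l l') :
    Subgroup.closure {t | t ∈ l} = Subgroup.closure {t | t ∈ l'} :=
  h.closure_le.antisymm h.symm.closure_le

theorem mem_red {T : Set G} (hT : ∀ a ∈ T, ∀ b, a * b * a⁻¹ ∈ T ↔ b ∈ T) {c : G}
    (h : HurwitzEquiv l l') (hl : l ∈ Red T c) : l' ∈ Red T c :=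
  ⟨(h.forall_mem_iff hT).mp hl.1, h.prod_eq.symm.trans hl.2.1,
    fun l'' hl'' hprod => h.length_eq.symm.trans_le (hl.2.2 l'' hl'' hprod)⟩

end HurwitzEquiv

theorem tail_mem_red {T : Set G} {c t : G} {l : List G} (h : t :: l ∈ Red T c) :
    l ∈ Red T l.prod := by
  obtain ⟨hmem, hprod, hmin⟩ := h
  rw [List.forall_mem_cons] at hmem
  refine ⟨hmem.2, rfl, fun l' hl' hl'prod => ?_⟩
  have := hmin (t :: l') (List.forall_mem_cons.mpr ⟨hmem.1, hl'⟩) (by simpa [hl'prod] using hprod)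
  simpa using this

theorem cons_cons_self_notMem_red {T : Set G} {c a : G} {l : List G} (ha : a * a = 1) :
    a :: a :: l ∉ Red T c := by
  rintro ⟨hmem, hprod, hmin⟩
  rw [List.forall_mem_cons, List.forall_mem_cons] at hmem
  have hle := hmin l hmem.2.2 <| by
    rw [← hprod, List.prod_cons, List.prod_cons, ← mul_assoc, ha, one_mul]
  simp only [List.length_cons] at hle
  lia

theorem red_eq_red_of_subset {T T' : Set G} (hT' : T' ⊆ T) {c : G} (hne : (Red T c).Nonempty)
    (h : ∀ l ∈ Red T c, ∀ t ∈ l, t ∈ T') : Red T c = Red T' c := by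
  obtain ⟨l₀, hl₀⟩ := hne
  ext l
  constructor
  · intro hl
    exact ⟨h l hl, hl.2.1, fun l' hl' => hl.2.2 l' fun t ht => hT' (hl' t ht)⟩
  · rintro ⟨hmem, hprod, hmin⟩
    exact ⟨fun t ht => hT' (hmem t ht), hprod, fun l' hl' hprod' =>
      (hmin l₀ (h l₀ hl₀) hl₀.2.1).trans (hl₀.2.2 l' hl' hprod')⟩

variable {a b : G}

theorem zpow_mul_mul_zpow_mul_of_inv_eq_self (ha : a⁻¹ = a) (hb : b⁻¹ = b) (k l : ℤ) :
    (a * b) ^ k * a * ((a * b) ^ l * a) = (a * b) ^ (k - l) := by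
  have hconj : a * (a * b) ^ l * a = (a * b) ^ (-l) := by
    nth_rw 3 [← ha]
    rw [← conj_zpow, ← inv_zpow', mul_inv_rev, ha, hb, mul_assoc, mul_assoc, ← mul_assoc a a,
      mul_eq_one_iff_eq_inv.mpr ha.symm, one_mul]
  rw [sub_eq_add_neg, zpow_add, ← hconj]
  simp only [mul_assoc]

theorem inv_zpow_mul_of_inv_eq_self (ha : a⁻¹ = a) (hb : b⁻¹ = b) (k : ℤ) :
    ((a * b) ^ k * a)⁻¹ = (a * b) ^ k * a := by
  rw [inv_eq_iff_mul_eq_one, zpow_mul_mul_zpow_mul_of_inv_eq_self ha hb, sub_self, zpow_zero]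

theorem zpow_sub_one_mul_of_inv_eq_self (hb : b⁻¹ = b) (k : ℤ) :
    (a * b) ^ (k - 1) * a = (a * b) ^ k * b := by
  rw [zpow_sub_one, mul_inv_rev, hb, mul_assoc, inv_mul_cancel_right]

theorem HurwitzEquiv.zpow_mul (ha : a⁻¹ = a) (hb : b⁻¹ = b) (k : ℤ) (l : List G) :
    HurwitzEquiv (a :: b :: l) ((a * b) ^ k * a :: (a * b) ^ k * b :: l) := by
  have hstep (k : ℤ) : HurwitzEquiv ((a * b) ^ k * a :: (a * b) ^ k * b :: l)
      ((a * b) ^ (k + 1) * a :: (a * b) ^ (k + 1) * b :: l) := by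
    convert HurwitzEquiv.swap ((a * b) ^ k * a) ((a * b) ^ k * b) l using 2
    · rw [inv_zpow_mul_of_inv_eq_self ha hb, ← zpow_sub_one_mul_of_inv_eq_self hb,
        zpow_mul_mul_zpow_mul_of_inv_eq_self ha hb, ← mul_assoc, ← zpow_add]
      ring_nf
    · rw [← zpow_sub_one_mul_of_inv_eq_self hb, add_sub_cancel_right]
  induction k with
  | zero => simpa using .refl _
  | succ k ih => exact ih.trans (hstep k)
  | pred k ih => exact ih.trans (by simpa using (hstep (-k - 1)).symm)

end Hurwitz

section GeometricRepresentation

open Polynomial.Chebyshev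

theorem eval_S_two_mul_cos_mul_pi_eq_zero {k : ℕ} {θ : ℝ} (hθ : Real.sin θ ≠ 0)
    (hkθ : k * θ = Real.pi) : (S ℝ ((k : ℤ) - 1)).eval (2 * Real.cos θ) = 0 := by
  refine (mul_eq_zero.mp ?_).resolve_right hθ
  rw [S_two_mul_real_cos]
  simp [hkθ]

theorem eval_S_add_eval_S_two_mul_cos_eq_zero {k : ℕ} {θ : ℝ} (hθ : Real.sin θ ≠ 0)
    (hkθ : (2 * k + 1) * θ = 2 * Real.pi) :
    (S ℝ (k : ℤ)).eval (2 * Real.cos θ) + (S ℝ ((k : ℤ) - 1)).eval (2 * Real.cos θ) = 0 := by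
  refine (mul_eq_zero.mp ?_).resolve_right hθ
  rw [add_mul, S_two_mul_real_cos, S_two_mul_real_cos]
  have : ((k : ℤ) + 1 : ℝ) * θ = 2 * Real.pi - k * θ := by
    push_cast
    linear_combination hkθ
  rw [this, Real.sin_two_pi_sub]
  simp

variable {V : Type*} [AddCommGroup V] [Module ℝ V] {x y : V} {f g : Module.Dual ℝ V}

theorem reflection_mul_reflection_pow_eq_one_of_sin_ne_zero (hf : f x = 2) (hg : g y = 2) {m : ℕ}
    {θ : ℝ} (hθ : Real.sin θ ≠ 0) (hmθ : m * θ = 2 * Real.pi)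
    (ht : 2 * Real.cos θ = f y * g x - 2) :
    (Module.reflection hf * Module.reflection hg) ^ m = 1 := by
  ext z
  rw [Module.reflection_mul_reflection_pow_apply hf hg m z _ ht]
  obtain ⟨k, rfl | rfl⟩ := Nat.even_or_odd' m
  · have hkθ : k * θ = Real.pi := by
      push_cast at hmθ
      linarith
    rw [show (((2 * k : ℕ) : ℤ) - 2) / 2 = k - 1 by lia,
      show (((2 * k : ℕ) : ℤ) - 1) / 2 = k - 1 by lia, eval_S_two_mul_cos_mul_pi_eq_zero hθ hkθ]
    simp
  · push_cast at hmθ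
    rw [show (((2 * k + 1 : ℕ) : ℤ) - 2) / 2 = k - 1 by lia,
      show (((2 * k + 1 : ℕ) : ℤ) - 1) / 2 = k by lia,
      show (((2 * k + 1 : ℕ) : ℤ) - 3) / 2 = k - 1 by lia,
      show ((2 * k + 1 : ℕ) : ℤ) / 2 = k by lia, eval_S_add_eval_S_two_mul_cos_eq_zero hθ hmθ]
    simp

theorem reflection_mul_reflection_pow_eq_one (hf : f x = 2) (hg : g y = 2) {m : ℕ} (hm : m ≠ 1)
    (hfy : f y = -2 * Real.cos (Real.pi / m)) (hgx : g x = -2 * Real.cos (Real.pi / m)) :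
    (Module.reflection hf * Module.reflection hg) ^ m = 1 := by
  obtain rfl | rfl | hm3 : m = 0 ∨ m = 2 ∨ 3 ≤ m := by lia
  · rw [pow_zero]
  · have hfy : f y = 0 := by simp [hfy]
    have hgx : g x = 0 := by simp [hgx]
    ext z
    simp only [pow_two, LinearEquiv.mul_apply, Module.reflection_apply, map_sub, map_smul, hf, hg,
      hfy, hgx, LinearEquiv.coe_one, id_eq]
    module
  · have hm0 : (0 : ℝ) < m := by positivity
    have hθ : Real.sin (2 * Real.pi / m) ≠ 0 := by
      refine (Real.sin_pos_of_pos_of_lt_pi (by positivity) ?_).ne'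
      have : (3 : ℝ) ≤ m := by exact_mod_cast hm3
      rw [div_lt_iff₀ hm0]
      nlinarith [Real.pi_pos]
    refine reflection_mul_reflection_pow_eq_one_of_sin_ne_zero hf hg hθ (by field_simp) ?_
    rw [hfy, hgx, mul_div_assoc, Real.cos_two_mul]
    ring

variable {B W : Type*} [Group W] {M : CoxeterMatrix B}

/-- The linear form `α_j ↦ -2 cos (π / M i j)` on the space with basis the simple roots
`α_j = Finsupp.single j 1`; the `i`-th simple reflection acts by `v ↦ v - simpleCoroot M i v • α_i`.
Entries `M i j = 0`, which encode `∞`, give the value `-2` because `π / 0 = 0`. -/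
noncomputable def simpleCoroot (M : CoxeterMatrix B) (i : B) : Module.Dual ℝ (B →₀ ℝ) :=
  Finsupp.linearCombination ℝ fun j => -2 * Real.cos (Real.pi / M i j)

theorem simpleCoroot_single (i j : B) :
    simpleCoroot M i (Finsupp.single j 1) = -2 * Real.cos (Real.pi / M i j) := by
  simp [simpleCoroot]

theorem simpleCoroot_single_self (i : B) : simpleCoroot M i (Finsupp.single i 1) = 2 := by
  simp [simpleCoroot_single]

theorem isLiftable_reflection_simpleCoroot :
    M.IsLiftable fun i => Module.reflection (simpleCoroot_single_self (M := M) i) := by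
  intro i j
  obtain rfl | hij := eq_or_ne i j
  · ext1 z
    simpa using Module.involutive_reflection (simpleCoroot_single_self (M := M) i) z
  · refine reflection_mul_reflection_pow_eq_one _ _ (M.off_diagonal i j hij)
      (simpleCoroot_single i j) ?_
    rw [simpleCoroot_single, M.symmetric]

/-- The geometric (Tits) representation of a Coxeter group on the real vector space with basis the
simple roots. -/
noncomputable def geometricRepresentation (cs : CoxeterSystem M W) :
    W →* (B →₀ ℝ) ≃ₗ[ℝ] (B →₀ ℝ) :=
  cs.lift ⟨_, isLiftable_reflection_simpleCoroot⟩

variable (cs : CoxeterSystem M W)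

theorem geometricRepresentation_simple_apply (i : B) (v : B →₀ ℝ) :
    geometricRepresentation cs (cs.simple i) v = v - simpleCoroot M i v • Finsupp.single i 1 := by
  rw [geometricRepresentation, cs.lift_apply_simple, Module.reflection_apply]

theorem geometricRepresentation_wordProd_apply_of_notMem {i : B} {ω : List B} (hi : i ∉ ω)
    (v : B →₀ ℝ) : geometricRepresentation cs (cs.wordProd ω) v i = v i := by
  induction ω with
  | nil => simp
  | cons j ω ih =>
    rw [List.mem_cons, not_or] at hi
    rw [cs.wordProd_cons, map_mul, LinearEquiv.mul_apply, geometricRepresentation_simple_apply]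
    simp [ih hi.2, hi.1]

theorem simple_ne_wordProd_of_notMem {i : B} {ω : List B} (hi : i ∉ ω) :
    cs.simple i ≠ cs.wordProd ω := by
  intro h
  have := geometricRepresentation_wordProd_apply_of_notMem cs hi (Finsupp.single i 1)
  rw [← h, geometricRepresentation_simple_apply, simpleCoroot_single_self] at this
  norm_num at this

theorem eq_nil_of_nodup_of_wordProd_eq_one {ω : List B} (hω : ω.Nodup) (h : cs.wordProd ω = 1) :
    ω = [] := by
  cases ω with
  | nil => rfl
  | cons i ω =>
    rw [cs.wordProd_cons, mul_eq_one_iff_eq_inv, ← cs.wordProd_reverse] at h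
    refine absurd h (simple_ne_wordProd_of_notMem cs ?_)
    rw [List.mem_reverse]
    exact (List.nodup_cons.mp hω).1

end GeometricRepresentation

section InversionParity

variable {B W : Type*} [Group W]

open Classical in
/-- The involution `(t, z) ↦ (s t s⁻¹, z + [t = s])` of `W × ZMod 2` attached to a simple reflection
`s`. Composing these along a word counts, modulo `2`, how often `t` occurs in an inversion sequence
of the word. -/
noncomputable def conjFlip (s : W) : Function.End (W × ZMod 2) :=
  fun p => (s * p.1 * s⁻¹, p.2 + if p.1 = s then 1 else 0)

open Classical in
theorem conjFlip_smul (s : W) (p : W × ZMod 2) :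
    conjFlip s • p = (s * p.1 * s⁻¹, p.2 + if p.1 = s then 1 else 0) := rfl

variable {M : CoxeterMatrix B} (cs : CoxeterSystem M W)

open Classical in
theorem prod_map_conjFlip_reverse_smul (ω : List B) (p : W × ZMod 2) :
    (ω.reverse.map fun i => conjFlip (cs.simple i)).prod • p =
      ((cs.wordProd ω)⁻¹ * p.1 * cs.wordProd ω, p.2 + (cs.leftInvSeq ω).count p.1) := by
  induction ω generalizing p with
  | nil => simp
  | cons i ω ih =>
    have hcount : ((cs.leftInvSeq ω).map (MulAut.conj (cs.simple i))).count p.1 =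
        (cs.leftInvSeq ω).count (cs.simple i * p.1 * (cs.simple i)⁻¹) := by
      rw [← List.count_map_of_injective (cs.leftInvSeq ω) _ (MulAut.conj (cs.simple i)).injective]
      simp [mul_assoc]
    rw [List.reverse_cons, List.map_append, List.prod_append, List.map_singleton,
      List.prod_singleton, mul_smul, conjFlip_smul, ih, CoxeterSystem.leftInvSeq, List.count_cons,
      hcount, cs.wordProd_cons, Prod.mk.injEq]
    constructor
    · simp only [mul_inv_rev, cs.inv_simple, mul_assoc]
    · by_cases h : p.1 = cs.simple i
      · simp [h, add_comm, add_left_comm]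
      · simp [h, Ne.symm h]

open Classical in
theorem even_count_leftInvSeq_alternatingWord (i j : B) (t : W) :
    Even ((cs.leftInvSeq (CoxeterSystem.alternatingWord i j (2 * M i j))).count t) := by
  set L := cs.leftInvSeq (CoxeterSystem.alternatingWord i j (2 * M i j)) with hL
  have hlen : L.length = 2 * M i j := by simp [hL]
  have hperiod : L.drop (M i j) = L.take (M i j) := by
    refine List.ext_getElem ?_ fun k _ hk => ?_
    · rw [List.length_drop, List.length_take, hlen]
      lia
    have hkM : k < M i j := hk.trans_le (List.length_take_le _ _)
    rw [List.getElem_drop, List.getElem_take,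
      cs.getElem_leftInvSeq_alternatingWord i j (M i j) (M i j + k) (by lia),
      cs.getElem_leftInvSeq_alternatingWord i j (M i j) k (by lia),
      cs.prod_alternatingWord_eq_mul_pow, cs.prod_alternatingWord_eq_mul_pow,
      show (2 * (M i j + k) + 1) / 2 = M j i + k by rw [M.symmetric j i]; lia,
      show (2 * k + 1) / 2 = k by lia, pow_add, cs.simple_mul_simple_pow, one_mul]
    simp
  rw [← List.take_append_drop (M i j) L, hperiod, List.count_append]
  exact Even.add_self _

theorem prod_map_reverse_alternatingWord_two_mul {N : Type*} [Monoid N] (f : B → N) (i j : B)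
    (m : ℕ) :
    ((CoxeterSystem.alternatingWord i j (2 * m)).reverse.map f).prod = (f j * f i) ^ m := by
  induction m with
  | zero => simp [CoxeterSystem.alternatingWord]
  | succ m ih =>
    simp [mul_add_one, CoxeterSystem.alternatingWord_succ, ih, pow_succ', mul_assoc,
      -List.map_reverse]

theorem isLiftable_conjFlip : M.IsLiftable fun i => conjFlip (cs.simple i) := by
  classical
  intro i j
  have hword : cs.wordProd (CoxeterSystem.alternatingWord j i (2 * M j i)) = 1 := by
    simp [cs.prod_alternatingWord_eq_mul_pow]
  rw [M.symmetric i j, ← prod_map_reverse_alternatingWord_two_mul (fun i => conjFlip (cs.simple i))]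
  refine FaithfulSMul.eq_of_smul_eq_smul fun p : W × ZMod 2 => ?_
  rw [prod_map_conjFlip_reverse_smul, hword,
    (even_count_leftInvSeq_alternatingWord cs j i p.1).natCast_zmod_two]
  simp

/-- The number of occurrences of `t`, modulo `2`, in the left inversion sequence of any word for
`w`. For a reflection `t` this detects whether `t` is a left inversion of `w`. -/
noncomputable def inversionParity (w t : W) : ZMod 2 :=
  (cs.lift ⟨_, isLiftable_conjFlip cs⟩ w⁻¹ • (t, (0 : ZMod 2))).2

open Classical in
theorem lift_conjFlip_inv_wordProd_smul (ω : List B) (p : W × ZMod 2) :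
    cs.lift ⟨_, isLiftable_conjFlip cs⟩ (cs.wordProd ω)⁻¹ • p =
      ((cs.wordProd ω)⁻¹ * p.1 * cs.wordProd ω, p.2 + (cs.leftInvSeq ω).count p.1) := by
  rw [← prod_map_conjFlip_reverse_smul, ← cs.wordProd_reverse, CoxeterSystem.wordProd,
    map_list_prod, List.map_map]
  simp [Function.comp_def, cs.lift_apply_simple]

open Classical in
theorem inversionParity_wordProd (ω : List B) (t : W) :
    inversionParity cs (cs.wordProd ω) t = (cs.leftInvSeq ω).count t := by
  rw [inversionParity, lift_conjFlip_inv_wordProd_smul, zero_add]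

open Classical in
theorem inversionParity_simple (i : B) (t : W) :
    inversionParity cs (cs.simple i) t = if t = cs.simple i then 1 else 0 := by
  rw [← cs.wordProd_singleton, inversionParity_wordProd]
  by_cases h : t = cs.simple i
  · simp [h]
  · simp [h, Ne.symm h]

theorem lift_conjFlip_inv_smul (w : W) (p : W × ZMod 2) :
    cs.lift ⟨_, isLiftable_conjFlip cs⟩ w⁻¹ • p =
      (w⁻¹ * p.1 * w, p.2 + inversionParity cs w p.1) := by
  classical
  obtain ⟨ω, rfl⟩ := cs.wordProd_surjective w
  rw [lift_conjFlip_inv_wordProd_smul, inversionParity_wordProd]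

theorem inversionParity_mul (u v t : W) :
    inversionParity cs (u * v) t =
      inversionParity cs u t + inversionParity cs v (u⁻¹ * t * u) := by
  rw [inversionParity, mul_inv_rev, map_mul, mul_smul, lift_conjFlip_inv_smul,
    lift_conjFlip_inv_smul, zero_add]

theorem inversionParity_one (t : W) : inversionParity cs 1 t = 0 := by
  simpa using inversionParity_mul cs 1 1 t

theorem inversionParity_inv (w t : W) :
    inversionParity cs w⁻¹ (w⁻¹ * t * w) = inversionParity cs w t := by
  have h := inversionParity_mul cs w w⁻¹ t
  rw [mul_inv_cancel, inversionParity_one] at h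
  exact (CharTwo.add_eq_zero.mp h.symm).symm

open Classical in
theorem inversionParity_conj_simple (w : W) (i : B) (t : W) {u : W}
    (hu : u = w * cs.simple i * w⁻¹) :
    inversionParity cs u t = inversionParity cs w t + (if t = u then 1 else 0) +
      inversionParity cs w (u⁻¹ * t * u) := by
  have hconj : (w * cs.simple i)⁻¹ * t * (w * cs.simple i) = w⁻¹ * (u⁻¹ * t * u) * w := by
    subst hu; group
  have ht : w⁻¹ * t * w = cs.simple i ↔ t = u := by
    rw [hu, mul_assoc, inv_mul_eq_iff_eq_mul, eq_mul_inv_iff_mul_eq]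
  nth_rw 1 [hu]
  rw [inversionParity_mul, inversionParity_mul, inversionParity_simple, hconj, inversionParity_inv,
    if_congr ht rfl rfl]

theorem inversionParity_self {t : W} (ht : cs.IsReflection t) : inversionParity cs t t = 1 := by
  obtain ⟨w, i, h⟩ := ht
  rw [inversionParity_conj_simple cs w i t h, inv_mul_cancel, one_mul, if_pos rfl, add_right_comm,
    CharTwo.add_self_eq_zero, zero_add]

theorem mem_leftInvSeq_of_inversionParity_ne_zero {ω : List B} {t : W}
    (h : inversionParity cs (cs.wordProd ω) t ≠ 0) : t ∈ cs.leftInvSeq ω := by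
  classical
  by_contra hmem
  exact h (by rw [inversionParity_wordProd, List.count_eq_zero_of_not_mem hmem, Nat.cast_zero])

theorem isLeftInversion_of_inversionParity_ne_zero {w t : W} (h : inversionParity cs w t ≠ 0) :
    cs.IsLeftInversion w t := by
  obtain ⟨ω, hω, rfl⟩ := cs.exists_isReduced w
  exact cs.isLeftInversion_of_mem_leftInvSeq hω (mem_leftInvSeq_of_inversionParity_ne_zero cs h)

theorem inversionParity_ne_zero {w t : W} (h : cs.IsLeftInversion w t) :
    inversionParity cs w t ≠ 0 := by
  intro h0
  refine h.1.isLeftInversion_mul_right_iff.mp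
    (isLeftInversion_of_inversionParity_ne_zero cs (w := t * w) ?_) h
  rw [inversionParity_mul, inversionParity_self cs h.1, inv_mul_cancel, one_mul, h0, add_zero]
  exact one_ne_zero

theorem mem_leftInvSeq_of_isLeftInversion {ω : List B} {t : W}
    (h : cs.IsLeftInversion (cs.wordProd ω) t) : t ∈ cs.leftInvSeq ω :=
  mem_leftInvSeq_of_inversionParity_ne_zero cs (inversionParity_ne_zero cs h)

theorem isLeftInversion_of_mul_eq_mul {u v x y : W} (hv : cs.IsReflection v)
    (h : u * x = v * y) (hx : ¬ cs.IsLeftInversion x (u⁻¹ * v * u))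
    (hy : ¬ cs.IsLeftInversion y v) : cs.IsLeftInversion u v := by
  have hpar := congrArg (inversionParity cs · v) h
  simp only [inversionParity_mul, inversionParity_self cs hv, inv_mul_cancel, one_mul,
    not_imp_comm.mp (isLeftInversion_of_inversionParity_ne_zero cs) hx,
    not_imp_comm.mp (isLeftInversion_of_inversionParity_ne_zero cs) hy, add_zero] at hpar
  exact isLeftInversion_of_inversionParity_ne_zero cs (hpar ▸ one_ne_zero)

theorem exists_mem_forall_isLeftInversion_imp_eq {R : Set W} (hR : ∃ t ∈ R, cs.IsReflection t)
    (hconj : ∀ u ∈ R, ∀ v ∈ R, u⁻¹ * v * u ∈ R) :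
    ∃ u ∈ R, ∀ v ∈ R, cs.IsLeftInversion u v → v = u := by
  classical
  obtain ⟨_, hmem, w, i, rfl⟩ := hR
  obtain ⟨w, hw, hmin⟩ := exists_minimalFor_of_wellFoundedLT
    (fun w => w * cs.simple i * w⁻¹ ∈ R) cs.length ⟨w, hmem⟩
  set u := w * cs.simple i * w⁻¹ with hu
  -- An inversion `v ∈ R` of `w` would make `v * w` a shorter choice.
  have hzero (v : W) (hv : v ∈ R) : inversionParity cs w v = 0 := by
    by_contra hne
    obtain ⟨hvrefl, hlt⟩ := isLeftInversion_of_inversionParity_ne_zero cs hne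
    refine (hmin ?_ hlt.le).not_gt hlt
    have := hconj v hv u hw
    simpa only [hu, hvrefl.inv, mul_inv_rev, mul_assoc] using this
  refine ⟨u, hw, fun v hv hinv => ?_⟩
  by_contra hne
  apply inversionParity_ne_zero cs hinv
  rw [inversionParity_conj_simple cs w i v hu, hzero v hv, hzero _ (hconj u hw v hv), if_neg hne,
    add_zero, add_zero]

end InversionParity

section HurwitzTransitivity

variable {B W : Type*} [Group W] {M : CoxeterMatrix B} (cs : CoxeterSystem M W)

theorem conj_mem_setOf_isReflection_iff :
    ∀ a ∈ {t | cs.IsReflection t}, ∀ b,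
      a * b * a⁻¹ ∈ {t | cs.IsReflection t} ↔ b ∈ {t | cs.IsReflection t} :=
  fun a _ b => cs.isReflection_conj_iff a b

theorem isReflection_zpow_mul {t t' : W} (ht : cs.IsReflection t) (ht' : cs.IsReflection t')
    (k : ℤ) : cs.IsReflection ((t * t') ^ k * t) :=
  ((HurwitzEquiv.zpow_mul ht.inv ht'.inv k []).forall_mem_iff
    (conj_mem_setOf_isReflection_iff cs)).mp (by simp [ht, ht']) _ List.mem_cons_self

theorem exists_zpow_mul_length_lt {y t t' : W} (ht : cs.IsLeftInversion y t)
    (ht' : cs.IsLeftInversion y t') (hne : t ≠ t') :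
    ∃ k : ℤ, cs.length ((t * t') ^ k * y) < cs.length y := by
  by_contra! hmin
  let R : Set W := Set.range fun k : ℤ => (t * t') ^ k * t
  have hconj : ∀ u ∈ R, ∀ v ∈ R, u⁻¹ * v * u ∈ R := by
    rintro _ ⟨k, rfl⟩ _ ⟨l, rfl⟩
    refine ⟨k - l + k, ?_⟩
    beta_reduce
    rw [inv_zpow_mul_of_inv_eq_self ht.1.inv ht'.1.inv,
      zpow_mul_mul_zpow_mul_of_inv_eq_self ht.1.inv ht'.1.inv, zpow_add, mul_assoc]
  -- `y` is shortest in its coset of `⟨t * t'⟩`, so neither `t * y` nor `t' * y` has an inversion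
  -- in `R`.
  have hnot {s : W} (hs : cs.IsLeftInversion y s) {j : ℤ} (hj : t * s = (t * t') ^ j) :
      ∀ v ∈ R, ¬ cs.IsLeftInversion (s * y) v := by
    rintro _ ⟨k, rfl⟩ hinv
    have hlt := hinv.2
    rw [← mul_assoc, mul_assoc (_ ^ k), hj, ← zpow_add] at hlt
    exact ((hmin _).trans_lt hlt).not_gt hs.2
  have hR : ∃ u ∈ R, cs.IsReflection u := ⟨t, ⟨0, by simp⟩, ht.1⟩
  obtain ⟨_, ⟨k, rfl⟩, hcan⟩ := exists_mem_forall_isLeftInversion_imp_eq cs hR hconj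
  have hvR : (t * t') ^ k * t' ∈ R := ⟨k - 1, zpow_sub_one_mul_of_inv_eq_self ht'.1.inv k⟩
  have hv : cs.IsReflection ((t * t') ^ k * t') := by
    rw [← zpow_sub_one_mul_of_inv_eq_self ht'.1.inv]
    exact isReflection_zpow_mul cs ht.1 ht'.1 _
  have heq : (t * t') ^ k * t * (t * y) = (t * t') ^ k * t' * (t' * y) := by
    rw [mul_assoc, ← mul_assoc t, ht.1.mul_self, mul_assoc, ← mul_assoc t', ht'.1.mul_self]
  have hinv := isLeftInversion_of_mul_eq_mul cs hv heq
    (hnot ht (j := 0) (by rw [ht.1.mul_self, zpow_zero]) _ (hconj _ ⟨k, rfl⟩ _ hvR))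
    (hnot ht' (j := 1) (zpow_one _).symm _ hvR)
  exact hne (mul_left_cancel (hcan _ hvR hinv)).symm

theorem exists_hurwitzEquiv_cons_length_prod_lt {t t' : W} {l₁ l₂ : List W}
    (ht : cs.IsLeftInversion l₁.prod t) (ht' : cs.IsLeftInversion l₁.prod t') (hne : t ≠ t')
    (h : HurwitzEquiv l₁ (t' :: l₂)) :
    ∃ u l, HurwitzEquiv (t :: l₁) (u :: l) ∧ cs.length l.prod < cs.length l₁.prod := by
  obtain ⟨k, hk⟩ := exists_zpow_mul_length_lt cs ht ht' hne
  refine ⟨_, _, (h.cons t).trans (.zpow_mul ht.1.inv ht'.1.inv k l₂), ?_⟩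
  rwa [List.prod_cons, mul_assoc, ← List.prod_cons, ← h.prod_eq]

theorem exists_hurwitzEquiv_cons_isLeftInversion {w : W} {l : List W}
    (hl : l ∈ Red {t | cs.IsReflection t} w) (hne : l ≠ []) :
    ∃ t l', HurwitzEquiv l (t :: l') ∧ cs.IsLeftInversion w t := by
  induction hn : l.length generalizing l w with
  | zero => exact absurd (List.length_eq_zero_iff.mp hn) hne
  | succ n ih =>
    obtain ⟨l₁, ⟨t, h₁⟩, hmin⟩ := exists_minimalFor_of_wellFoundedLT
      (fun l₁ => ∃ t, HurwitzEquiv l (t :: l₁)) (fun l₁ => cs.length l₁.prod)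
      ⟨l.tail, l.head hne, by rw [List.cons_head_tail]; exact .refl l⟩
    have hred := h₁.mem_red (conj_mem_setOf_isReflection_iff cs) hl
    have ht : cs.IsReflection t := hred.1 t List.mem_cons_self
    have hw : w = t * l₁.prod := by rw [← hred.2.1, List.prod_cons]
    by_contra! hcon
    have hinv : cs.IsLeftInversion l₁.prod t := by
      have := hcon t l₁ h₁
      rwa [hw, ht.not_isLeftInversion_mul_right_iff] at this
    have hl₁ : l₁ ≠ [] := by
      rintro rfl
      simpa using hinv.2
    obtain ⟨t', l₂, h₂, hinv'⟩ := ih (tail_mem_red hred) hl₁ (by simpa [hn] using h₁.length_eq.symm)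
    have htt' : t ≠ t' := by
      rintro rfl
      exact cons_cons_self_notMem_red ht.mul_self
        ((h₂.cons t).mem_red (conj_mem_setOf_isReflection_iff cs) hred)
    obtain ⟨u, l₃, h₃, hlt⟩ := exists_hurwitzEquiv_cons_length_prod_lt cs hinv hinv' htt' h₂
    exact (hmin ⟨u, h₁.trans h₃⟩ hlt.le).not_gt hlt

theorem exists_sublist_hurwitzEquiv_cons_of_mem_leftInvSeq {ω : List B} {t : W}
    (ht : t ∈ cs.leftInvSeq ω) :
    ∃ ω' : List B, ω'.Sublist ω ∧ HurwitzEquiv (ω.map cs.simple) (t :: ω'.map cs.simple) := by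
  induction ω generalizing t with
  | nil => simp at ht
  | cons i ω ih =>
    rw [CoxeterSystem.leftInvSeq, List.mem_cons, List.mem_map] at ht
    obtain rfl | ⟨u, hu, rfl⟩ := ht
    · exact ⟨ω, List.sublist_cons_self i ω, .refl _⟩
    · obtain ⟨ω', hω', h⟩ := ih hu
      exact ⟨i :: ω', hω'.cons_cons i, (h.cons _).trans (.swap _ _ _)⟩

theorem hurwitzEquiv_map_simple_of_mem_red {ω : List B} (hω : ω.Nodup) {l : List W}
    (hl : l ∈ Red {t | cs.IsReflection t} (cs.wordProd ω)) :
    HurwitzEquiv l (ω.map cs.simple) := by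
  induction hn : l.length generalizing l ω with
  | zero =>
    obtain rfl := List.length_eq_zero_iff.mp hn
    rw [eq_nil_of_nodup_of_wordProd_eq_one cs hω hl.2.1.symm]
    exact .refl _
  | succ n ih =>
    obtain ⟨t, l', hll', ht⟩ := exists_hurwitzEquiv_cons_isLeftInversion cs hl (by grind)
    obtain ⟨ω', hω'ω, hωω'⟩ := exists_sublist_hurwitzEquiv_cons_of_mem_leftInvSeq cs
      (mem_leftInvSeq_of_isLeftInversion cs ht)
    have hl' := tail_mem_red (hll'.mem_red (conj_mem_setOf_isReflection_iff cs) hl)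
    have hprod : l'.prod = cs.wordProd ω' := by
      have := hll'.prod_eq.symm.trans (hl.2.1.trans hωω'.prod_eq)
      rwa [List.prod_cons, List.prod_cons, mul_right_inj] at this
    have := ih (hω.sublist hω'ω) (hprod ▸ hl') (by simpa [hn] using hll'.length_eq.symm)
    exact hll'.trans ((this.cons t).trans hωω'.symm)

theorem mem_red_of_length_eq_reflLength {c : W} {l : List W} (hl : ∀ t ∈ l, cs.IsReflection t)
    (hprod : l.prod = c) (hlen : l.length = reflLength cs c) :
    l ∈ Red {t | cs.IsReflection t} c :=
  ⟨hl, hprod, fun l' hl' hprod' => hlen.trans_le (Nat.sInf_le ⟨l', hl', hprod', rfl⟩)⟩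

theorem red_parabolic_coxeter_element_eq_general {ω : List B} (hω : ω.Nodup) {l₀ : List W}
    (hl₀ : l₀ ∈ Red {t | cs.IsReflection t} (cs.wordProd ω)) :
    Red {t | cs.IsReflection t} (cs.wordProd ω) =
      Red (↑(Subgroup.closure {t | t ∈ l₀}) ∩ {t | cs.IsReflection t}) (cs.wordProd ω) := by
  refine red_eq_red_of_subset Set.inter_subset_right ⟨l₀, hl₀⟩ fun l hl t ht => ⟨?_, hl.1 t ht⟩
  have h : HurwitzEquiv l l₀ := (hurwitzEquiv_map_simple_of_mem_red cs hω hl).trans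
    (hurwitzEquiv_map_simple_of_mem_red cs hω hl₀).symm
  rw [← h.closure_eq]
  exact Subgroup.subset_closure ht

end HurwitzTransitivity

/-- Let `(W,T)` be a dual Coxeter system of finite rank `m` (witnessed
by a Coxeter system `cs` indexed by `Fin m` with reflection set `T`), let
`c = s₁ ⋯ sₙ` be a parabolic Coxeter element, and let `W_c = ⟨t₁, …, tₙ⟩` for a reduced
reflection factorization `c = t₁ ⋯ tₙ`.  Then `Red_T(c) = Red_{T'}(c)` where
`T' = W_c ∩ T`: every minimal-length factorization of `c` into reflections uses only
reflections lying in `W_c`. -/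
theorem red_parabolic_coxeter_element_eq
    {W : Type*} [Group W] (T : Set W) (m n : ℕ) (hmn : n ≤ m)
    (M : CoxeterMatrix (Fin m)) (cs : CoxeterSystem M W)
    (hT : {t | cs.IsReflection t} = T)
    (c : W) (hc : c = (List.ofFn fun i : Fin n => cs.simple (Fin.castLE hmn i)).prod)
    (l₀ : List W) (hmem₀ : ∀ t ∈ l₀, t ∈ T) (hprod₀ : l₀.prod = c)
    (hred₀ : l₀.length = reflLength cs c)
    (Wc : Subgroup W) (hWc : Wc = Subgroup.closure {t | t ∈ l₀})
    (T' : Set W) (hT' : T' = ↑Wc ∩ T) :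
    Red T c = Red T' c := by
  subst hT hWc hT'
  have hcω : c = cs.wordProd (List.ofFn (Fin.castLE hmn)) := by
    rw [hc, CoxeterSystem.wordProd, List.map_ofFn, Function.comp_def]
  have hl₀ := mem_red_of_length_eq_reflLength cs hmem₀ hprod₀ hred₀
  rw [hcω] at hl₀ ⊢
  exact red_parabolic_coxeter_element_eq_general cs
    (List.nodup_ofFn.mpr (Fin.castLE_injective hmn)) hl₀
end

section
/- Let (W,S) be a Coxeter system of finite rank with reflection set T and length function ℓ, let I ⊆ S, and let W_I = ⟨I⟩ be the corresponding standard parabolic subgroup with T_I = T ∩ W_I. Then for every w ∈ W_I, Red_T(w) = Red_{T_I}(w): every minimal-length factorization of w into reflections of W consists of reflections lying in W_I. -/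
/-!
View a reflection factorization of `w` as a path from `1` to `w`, and induct on the sum of the
lengths of its vertices. If the path climbs at every step, then its last factor is an inversion of
`w`; inversions of elements of `W_I` lie in `W_I`, so one can remove factors from the end. Otherwise
the path has a peak `x < x * t₁ > x * t₁ * t₂`. With `ρ = t₁ * t₂`, replacing the pair `(t₁, t₂)` by
`(ρ ^ k * t₁, ρ ^ k * t₂)` preserves its product, and some `k` lowers the middle vertex. By
induction the new factors lie in `W_I`, hence so does `ρ`. As `ρ ≠ 1`, it has an inversion of the
form `ρ ^ k * t₂`, which lies in `W_I` along with `ρ`, hence so do `t₂` and `t₁`.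

Inversions are handled through a `ZMod 2`-valued cocycle on `W` whose value at `(w, t)` is nonzero
exactly when `t` is a right inversion of `w`.
-/

section Red

variable {G : Type*} [Group G] {T T' : Set G} {w a b a' b' : G} {l l₁ l₂ : List G}

theorem mul_ne_one_of_mem_red (h : l₁ ++ a :: b :: l₂ ∈ Red T w) : a * b ≠ 1 := by
  obtain ⟨hT, hprod, hmin⟩ := h
  intro hab
  have hle := hmin (l₁ ++ l₂) (fun t ht ↦ hT t (by grind))
    (by simpa [← mul_assoc a b, hab] using hprod)
  simp at hle

theorem replace_pair_mem_red (h : l₁ ++ a :: b :: l₂ ∈ Red T w) (ha' : a' ∈ T) (hb' : b' ∈ T)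
    (hmul : a' * b' = a * b) : l₁ ++ a' :: b' :: l₂ ∈ Red T w := by
  obtain ⟨hT, hprod, hmin⟩ := h
  refine ⟨fun t ht ↦ by grind, ?_, by simpa using hmin⟩
  simpa [← mul_assoc a' b', ← mul_assoc a b, hmul] using hprod

theorem red_nonempty (hT : ∀ t ∈ l, t ∈ T) (hprod : l.prod = w) : (Red T w).Nonempty := by
  obtain ⟨l₀, ⟨hT₀, hprod₀⟩, hmin⟩ := (measure List.length).wf.has_min
    {l : List G | (∀ t ∈ l, t ∈ T) ∧ l.prod = w} ⟨l, hT, hprod⟩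
  exact ⟨l₀, hT₀, hprod₀, fun l' hT' hprod' ↦ not_lt.mp (hmin l' ⟨hT', hprod'⟩)⟩

theorem red_eq_red_of_subset_s10 (hsub : T' ⊆ T) (h : ∀ l ∈ Red T w, ∀ t ∈ l, t ∈ T') :
    Red T w = Red T' w := by
  ext l
  constructor
  · intro hl
    exact ⟨h l hl, hl.2.1, fun l' hT' ↦ hl.2.2 l' fun t ht ↦ hsub (hT' t ht)⟩
  · rintro ⟨hT', hprod, hmin⟩
    refine ⟨fun t ht ↦ hsub (hT' t ht), hprod, fun l' hl' hprod' ↦ ?_⟩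
    obtain ⟨l₀, hl₀⟩ := red_nonempty hl' hprod'
    exact (hmin l₀ (h l₀ hl₀) hl₀.2.1).trans (hl₀.2.2 l' hl' hprod')

end Red

section Involutions

variable {G : Type*} [Group G] {a b : G}

theorem semiconjBy_mul_inv_of_mul_self (ha : a * a = 1) (hb : b * b = 1) :
    SemiconjBy b (a * b) (a * b)⁻¹ := by
  rw [SemiconjBy, mul_inv_rev, inv_eq_of_mul_eq_one_right ha, inv_eq_of_mul_eq_one_right hb,
    mul_assoc]

theorem zpow_add_one_mul_of_mul_self (hb : b * b = 1) (k : ℤ) :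
    (a * b) ^ (k + 1) * b = (a * b) ^ k * a := by
  rw [zpow_add_one, mul_assoc, mul_assoc a, hb, mul_one]

theorem zpow_mul_mul_zpow_mul_of_mul_self (ha : a * a = 1) (hb : b * b = 1) (k : ℤ) :
    (a * b) ^ k * a * ((a * b) ^ k * b) = a * b := by
  have hsemi : b * (a * b) ^ k = (a * b) ^ (-k) * b := by
    simpa only [inv_zpow'] using ((semiconjBy_mul_inv_of_mul_self ha hb).zpow_right k).eq
  calc (a * b) ^ k * a * ((a * b) ^ k * b)
      = (a * b) ^ (k + 1) * (b * (a * b) ^ k) * b := by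
        rw [← zpow_add_one_mul_of_mul_self hb]
        simp only [mul_assoc]
    _ = (a * b) ^ (k + 1) * (a * b) ^ (-k) * (b * b) := by
        rw [hsemi]
        simp only [mul_assoc]
    _ = a * b := by rw [← zpow_add, hb, mul_one, add_neg_cancel_comm, zpow_one]

theorem conj_zpow_mul_of_semiconjBy (h : SemiconjBy b a a⁻¹) (n k : ℤ) :
    a ^ n * (a ^ k * b) * (a ^ n)⁻¹ = a ^ (k + 2 * n) * b := by
  have hn : b * a ^ (-n) = a ^ n * b := by simpa using (h.zpow_right (-n)).eq
  rw [← zpow_neg, mul_assoc, mul_assoc, hn, ← mul_assoc, ← mul_assoc, ← zpow_add, ← zpow_add]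
  ring_nf

theorem pow_mul_conj_eq_iff_of_semiconjBy (h : SemiconjBy b a a⁻¹) (k n : ℕ) (g : G) :
    a ^ k * (a ^ n * g * (a ^ n)⁻¹) = b ↔ a ^ (k + 2 * n) * g = b := by
  have hn : b * a ^ n = (a ^ n)⁻¹ * b := by simpa using (h.pow_right n).eq
  rw [← mul_assoc, mul_inv_eq_iff_eq_mul, hn, eq_inv_mul_iff_mul_eq, ← mul_assoc, ← mul_assoc,
    ← pow_add, ← pow_add]
  ring_nf

end Involutions

section Cocycle

variable {W : Type*} [Group W] {B : Type*} {M : CoxeterMatrix B} (cs : CoxeterSystem M W)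

open scoped Classical in
/-- The action of the simple reflection `s i` on signed elements of `W`, with signs in `ZMod 2`:
conjugate by `s i`, and flip the sign of `s i` itself. -/
noncomputable def signedConj (i : B) : Function.End (W × ZMod 2) :=
  fun p ↦ (cs.simple i * p.1 * cs.simple i, p.2 + if p.1 = cs.simple i then 1 else 0)

open scoped Classical in
theorem signedConj_mul_apply (i j : B) (g : W) (e : ZMod 2) :
    (signedConj cs i * signedConj cs j) (g, e) =
      (cs.simple i * cs.simple j * g * (cs.simple i * cs.simple j)⁻¹,
        e + ((if g = cs.simple j then 1 else 0) +
          if cs.simple i * cs.simple j * g = cs.simple j then 1 else 0)) := by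
  have hi : cs.simple j * g * cs.simple j = cs.simple i ↔
      cs.simple i * cs.simple j * g = cs.simple j := by
    rw [← eq_mul_inv_iff_mul_eq, cs.inv_simple, ← mul_right_inj (cs.simple i),
      cs.simple_mul_simple_cancel_left, mul_assoc]
  change signedConj cs i (signedConj cs j (g, e)) = _
  simp only [signedConj, hi, add_assoc]
  simp only [mul_inv_rev, cs.inv_simple, mul_assoc]

open scoped Classical in
theorem signedConj_mul_pow_apply (i j : B) (n : ℕ) (g : W) (e : ZMod 2) :
    ((signedConj cs i * signedConj cs j) ^ n) (g, e) =
      ((cs.simple i * cs.simple j) ^ n * g * ((cs.simple i * cs.simple j) ^ n)⁻¹,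
        e + ∑ k ∈ Finset.range (2 * n),
          if (cs.simple i * cs.simple j) ^ k * g = cs.simple j then 1 else 0) := by
  have hconj := pow_mul_conj_eq_iff_of_semiconjBy (semiconjBy_mul_inv_of_mul_self
    (cs.simple_mul_simple_self i) (cs.simple_mul_simple_self j))
  induction n with
  | zero => simp [Function.End.one_def]
  | succ n ih =>
    have h₀ := hconj 0 n g
    have h₁ := hconj 1 n g
    rw [pow_zero, one_mul, zero_add] at h₀
    rw [pow_one, add_comm 1] at h₁
    rw [pow_succ']
    change (signedConj cs i * signedConj cs j)
      (((signedConj cs i * signedConj cs j) ^ n) (g, e)) = _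
    rw [ih, signedConj_mul_apply, mul_add, mul_one, Finset.sum_range_succ, Finset.sum_range_succ]
    simp only [h₀, h₁, add_assoc]
    simp only [pow_succ' _ n, mul_inv_rev, mul_assoc]

theorem isLiftable_signedConj : M.IsLiftable (signedConj cs) := by
  classical
  intro i j
  funext ⟨g, e⟩
  rw [signedConj_mul_pow_apply, cs.simple_mul_simple_pow, two_mul, Finset.sum_range_add]
  simp only [pow_add, cs.simple_mul_simple_pow, one_mul, CharTwo.add_self_eq_zero, add_zero,
    inv_one, mul_one]
  rfl

/-- The action of `W` on signed elements of `W` extending `signedConj`. -/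
noncomputable def signedConjHom : W →* Function.End (W × ZMod 2) :=
  cs.lift ⟨signedConj cs, isLiftable_signedConj cs⟩

/-- The sign picked up by `t` under the signed conjugation action of `w`. On reflections, it is the
indicator function of the right inversions of `w`. -/
noncomputable def reflectionCocycle (w t : W) : ZMod 2 := (signedConjHom cs w (t, 0)).2

theorem signedConjHom_apply (w g : W) (e : ZMod 2) :
    signedConjHom cs w (g, e) = (w * g * w⁻¹, e + reflectionCocycle cs w g) := by
  induction w using cs.simple_induction_left generalizing e with
  | one => simp [reflectionCocycle, Function.End.one_def]
  | mul_simple_left w i ih =>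
    have hmul (e : ZMod 2) : signedConjHom cs (cs.simple i * w) (g, e) =
        signedConj cs i (w * g * w⁻¹, e + reflectionCocycle cs w g) := by
      rw [map_mul, ← ih, signedConjHom, cs.lift_apply_simple]
      rfl
    rw [reflectionCocycle, hmul, hmul]
    simp [signedConj, mul_assoc, add_assoc]

theorem reflectionCocycle_mul (x y t : W) :
    reflectionCocycle cs (x * y) t =
      reflectionCocycle cs y t + reflectionCocycle cs x (y * t * y⁻¹) := by
  have hmul : signedConjHom cs (x * y) (t, 0) = signedConjHom cs x (signedConjHom cs y (t, 0)) := by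
    rw [map_mul]
    rfl
  rw [reflectionCocycle, hmul, signedConjHom_apply, signedConjHom_apply, zero_add]

@[simp]
theorem reflectionCocycle_one (t : W) : reflectionCocycle cs 1 t = 0 := by
  simp [reflectionCocycle, Function.End.one_def]

open scoped Classical in
theorem reflectionCocycle_simple (i : B) (t : W) :
    reflectionCocycle cs (cs.simple i) t = if t = cs.simple i then 1 else 0 := by
  simp [reflectionCocycle, signedConjHom, signedConj]

theorem reflectionCocycle_inv (w t : W) :
    reflectionCocycle cs w⁻¹ t = reflectionCocycle cs w (w⁻¹ * t * w) := by
  have h := reflectionCocycle_mul cs w w⁻¹ t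
  rw [mul_inv_cancel, reflectionCocycle_one, inv_inv] at h
  exact CharTwo.add_eq_zero.mp h.symm

theorem reflectionCocycle_conj (x w t : W) :
    reflectionCocycle cs (x * w * x⁻¹) (x * t * x⁻¹) =
      reflectionCocycle cs x t + reflectionCocycle cs w t +
        reflectionCocycle cs x (w * t * w⁻¹) := by
  have hconj : x⁻¹ * (x * t * x⁻¹) * x = t := by group
  rw [reflectionCocycle_mul, reflectionCocycle_inv, inv_inv, hconj, reflectionCocycle_mul,
    add_assoc]

theorem reflectionCocycle_self {t : W} (ht : cs.IsReflection t) :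
    reflectionCocycle cs t t = 1 := by
  obtain ⟨w, i, rfl⟩ := ht
  rw [reflectionCocycle_conj, mul_inv_cancel_right, reflectionCocycle_simple, if_pos rfl,
    add_right_comm, CharTwo.add_self_eq_zero, zero_add]

theorem mem_rightInvSeq_of_reflectionCocycle_ne_zero {ω : List B} {t : W}
    (h : reflectionCocycle cs (cs.wordProd ω) t ≠ 0) : t ∈ cs.rightInvSeq ω := by
  classical
  induction ω with
  | nil => simp at h
  | cons i ω ih =>
    rw [cs.wordProd_cons, reflectionCocycle_mul, reflectionCocycle_simple] at h
    rw [CoxeterSystem.rightInvSeq, List.mem_cons]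
    by_cases ht : cs.wordProd ω * t * (cs.wordProd ω)⁻¹ = cs.simple i
    · left
      rw [← ht]
      group
    · exact .inr (ih (by simpa [ht] using h))

theorem isRightInversion_of_reflectionCocycle_ne_zero {w t : W}
    (h : reflectionCocycle cs w t ≠ 0) : cs.IsRightInversion w t := by
  obtain ⟨ω, hω, rfl⟩ := cs.exists_isReduced w
  exact cs.isRightInversion_of_mem_rightInvSeq hω
    (mem_rightInvSeq_of_reflectionCocycle_ne_zero cs h)

theorem reflectionCocycle_ne_zero_iff_isRightInversion {w t : W} :
    reflectionCocycle cs w t ≠ 0 ↔ cs.IsRightInversion w t := by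
  refine ⟨isRightInversion_of_reflectionCocycle_ne_zero cs, fun h hzero ↦ ?_⟩
  have ht : cs.IsReflection t := h.1
  have hne : reflectionCocycle cs (w * t) t ≠ 0 := by
    simp [reflectionCocycle_mul, reflectionCocycle_self cs ht, hzero]
  exact ht.isRightInversion_mul_left_iff.mp (isRightInversion_of_reflectionCocycle_ne_zero cs hne) h

end Cocycle

section StandardParabolic

variable {W : Type*} [Group W] {B : Type*} {M : CoxeterMatrix B} (cs : CoxeterSystem M W)

/-- The standard parabolic subgroup `W_I`, generated by the simple reflections indexed by `I`. -/
def standardParabolic (I : Set B) : Subgroup W := Subgroup.closure (cs.simple '' I)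

theorem mem_standardParabolic_of_reflectionCocycle_ne_zero {I : Set B} {w t : W}
    (hw : w ∈ standardParabolic cs I) (h : reflectionCocycle cs w t ≠ 0) :
    t ∈ standardParabolic cs I := by
  classical
  induction hw using Subgroup.closure_induction generalizing t with
  | mem x hx =>
    obtain ⟨i, hi, rfl⟩ := hx
    rw [reflectionCocycle_simple, ne_eq, ite_eq_right_iff, Classical.not_imp] at h
    exact h.1 ▸ Subgroup.subset_closure ⟨i, hi, rfl⟩
  | one => simp at h
  | mul x y _ hy ihx ihy =>
    by_cases hzero : reflectionCocycle cs y t = 0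
    · rw [reflectionCocycle_mul, hzero, zero_add] at h
      rw [show t = y⁻¹ * (y * t * y⁻¹) * y by group]
      exact mul_mem (mul_mem (inv_mem hy) (ihx h)) hy
    · exact ihy hzero
  | inv x hx ih =>
    rw [reflectionCocycle_inv] at h
    rw [show t = x * (x⁻¹ * t * x) * x⁻¹ by group]
    exact mul_mem (mul_mem hx (ih h)) (inv_mem hx)

theorem mem_standardParabolic_of_length_lt {I : Set B} {w t : W}
    (ht : cs.IsReflection t) (hlt : cs.length w < cs.length (w * t))
    (hwt : w * t ∈ standardParabolic cs I) : t ∈ standardParabolic cs I := by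
  refine mem_standardParabolic_of_reflectionCocycle_ne_zero cs hwt
    ((reflectionCocycle_ne_zero_iff_isRightInversion cs).mpr ⟨ht, ?_⟩)
  rwa [mul_assoc, ht.mul_self, mul_one]

end StandardParabolic

section Dihedral

variable {W : Type*} [Group W] {B : Type*} {M : CoxeterMatrix B} (cs : CoxeterSystem M W)

theorem semiconjBy_mul_inv_of_isReflection {t₁ t₂ : W} (h₁ : cs.IsReflection t₁)
    (h₂ : cs.IsReflection t₂) : SemiconjBy t₂ (t₁ * t₂) (t₁ * t₂)⁻¹ :=
  semiconjBy_mul_inv_of_mul_self h₁.mul_self h₂.mul_self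

theorem isReflection_zpow_mul_s10 {t₁ t₂ : W} (h₁ : cs.IsReflection t₁) (h₂ : cs.IsReflection t₂)
    (k : ℤ) : cs.IsReflection ((t₁ * t₂) ^ k * t₂) := by
  have hconj := conj_zpow_mul_of_semiconjBy (semiconjBy_mul_inv_of_isReflection cs h₁ h₂)
  rcases Int.even_or_odd' k with ⟨n, rfl | rfl⟩
  · have h := hconj n 0
    rw [zpow_zero, one_mul, zero_add] at h
    exact h ▸ h₂.conj _
  · have h := hconj n 1
    rw [zpow_one, mul_assoc t₁, h₂.mul_self, mul_one, add_comm] at h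
    exact h ▸ h₁.conj _

theorem reflectionCocycle_conj_simple {i : B} {w t : W} (ht : t ≠ cs.simple i)
    (hconj : w * t * w⁻¹ ≠ cs.simple i) :
    reflectionCocycle cs (cs.simple i * w * (cs.simple i)⁻¹)
      (cs.simple i * t * (cs.simple i)⁻¹) = reflectionCocycle cs w t := by
  classical
  rw [reflectionCocycle_conj, reflectionCocycle_simple, reflectionCocycle_simple, if_neg ht,
    if_neg hconj, zero_add, add_zero]

theorem exists_reflectionCocycle_ne_zero_of_simple {t₁ t₂ : W} (h₁ : cs.IsReflection t₁)
    (h₂ : cs.IsReflection t₂) (hne : t₁ ≠ t₂) {i : B} {k : ℤ}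
    (hi : cs.simple i = (t₁ * t₂) ^ k * t₂) :
    ∃ n : ℤ, reflectionCocycle cs (t₁ * t₂) ((t₁ * t₂) ^ n * t₂) ≠ 0 := by
  classical
  refine ⟨k - 1, ?_⟩
  set q := (t₁ * t₂) ^ (k - 1) * t₂ with hq_def
  have hq : cs.IsReflection q := isReflection_zpow_mul_s10 cs h₁ h₂ (k - 1)
  have hmul : t₁ * t₂ * q = cs.simple i := by
    rw [hi, hq_def, ← mul_assoc, ← zpow_one_add, add_sub_cancel]
  have hρ : t₁ * t₂ = cs.simple i * q := by rw [← hmul, mul_assoc, hq.mul_self, mul_one]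
  have hqi : q ≠ cs.simple i := by
    intro hqi
    rw [hqi, cs.simple_mul_simple_self, mul_eq_one_iff_eq_inv, h₂.inv] at hρ
    exact hne hρ
  rw [hρ, reflectionCocycle_mul, reflectionCocycle_self cs hq, mul_inv_cancel_right,
    reflectionCocycle_simple, if_neg hqi]
  simp

theorem exists_reflectionCocycle_mul_ne_zero {t₁ t₂ : W} (h₁ : cs.IsReflection t₁)
    (h₂ : cs.IsReflection t₂) (hne : t₁ ≠ t₂) :
    ∃ k : ℤ, reflectionCocycle cs (t₁ * t₂) ((t₁ * t₂) ^ k * t₂) ≠ 0 := by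
  -- Conjugating by simple reflections keeps the claim until some `(t₁ * t₂) ^ k * t₂` is simple.
  have ⟨w, j, hw⟩ := h₂
  induction w using cs.simple_induction_left generalizing t₁ t₂ with
  | one =>
    refine exists_reflectionCocycle_ne_zero_of_simple cs h₁ h₂ hne (i := j) (k := 0) ?_
    simpa using hw.symm
  | mul_simple_left w i ih =>
    by_cases hi : ∃ k : ℤ, cs.simple i = (t₁ * t₂) ^ k * t₂
    · obtain ⟨k, hk⟩ := hi
      exact exists_reflectionCocycle_ne_zero_of_simple cs h₁ h₂ hne hk
    obtain ⟨u₁, rfl⟩ : ∃ u, t₁ = cs.simple i * u * (cs.simple i)⁻¹ :=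
      ⟨(cs.simple i)⁻¹ * t₁ * cs.simple i, by group⟩
    obtain ⟨u₂, rfl⟩ : ∃ u, t₂ = cs.simple i * u * (cs.simple i)⁻¹ :=
      ⟨(cs.simple i)⁻¹ * t₂ * cs.simple i, by group⟩
    rw [cs.isReflection_conj_iff] at h₁ h₂
    simp only [conj_mul, conj_zpow] at hi ⊢
    have hsimple (k : ℤ) : (u₁ * u₂) ^ k * u₂ ≠ cs.simple i := fun hk ↦ hi ⟨k, by simp [hk]⟩
    have hu₂ : u₂ = w * cs.simple j * w⁻¹ :=
      conj_injective (x := cs.simple i) (hw.trans (by group))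
    obtain ⟨k, hk⟩ := ih h₁ h₂ (by rintro rfl; exact hne rfl) hu₂
    have hconj := conj_zpow_mul_of_semiconjBy (semiconjBy_mul_inv_of_isReflection cs h₁ h₂) 1 k
    rw [zpow_one] at hconj
    exact ⟨k, by rwa [reflectionCocycle_conj_simple cs (hsimple k) (hconj ▸ hsimple _)]⟩

theorem exists_length_zpow_mul_lt_of_peak {x t₁ t₂ : W} (h₁ : cs.IsReflection t₁)
    (h₂ : cs.IsReflection t₂) (hne : t₁ ≠ t₂) (hup : cs.length x < cs.length (x * t₁))
    (hdown : cs.length (x * t₁ * t₂) < cs.length (x * t₁)) :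
    ∃ k : ℤ, cs.length (x * ((t₁ * t₂) ^ k * t₁)) < cs.length (x * t₁) := by
  by_contra! hmin
  set ρ := t₁ * t₂
  have hzpow (k : ℤ) : ρ ^ (k + 1) * t₂ = ρ ^ k * t₁ :=
    zpow_add_one_mul_of_mul_self h₂.mul_self k
  have hzero (k : ℤ) : reflectionCocycle cs x (ρ ^ k * t₂) = 0 := by
    by_contra h
    have hlt := ((reflectionCocycle_ne_zero_iff_isRightInversion cs).mp h).2
    rw [← sub_add_cancel k 1, hzpow] at hlt
    exact (hup.trans_le (hmin (k - 1))).not_gt hlt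
  have hzero' (k : ℤ) : reflectionCocycle cs (x * ρ) (ρ ^ k * t₂) = 0 := by
    by_contra h
    have hlt := ((reflectionCocycle_ne_zero_iff_isRightInversion cs).mp h).2
    rw [mul_assoc, ← mul_assoc ρ, ← zpow_one_add, add_comm, hzpow] at hlt
    rw [mul_assoc] at hdown
    exact (hdown.trans_le (hmin k)).not_gt hlt
  -- By the cocycle identity `ρ` then has no inversion of the form `ρ ^ k * t₂`.
  obtain ⟨k, hk⟩ := exists_reflectionCocycle_mul_ne_zero cs h₁ h₂ hne
  have hconj := conj_zpow_mul_of_semiconjBy (semiconjBy_mul_inv_of_isReflection cs h₁ h₂) 1 k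
  rw [zpow_one] at hconj
  have hmul := reflectionCocycle_mul cs x ρ (ρ ^ k * t₂)
  rw [hconj, hzero, hzero', add_zero] at hmul
  exact hk hmul.symm

theorem mem_standardParabolic_of_mul_mem {I : Set B} {t₁ t₂ : W} (h₁ : cs.IsReflection t₁)
    (h₂ : cs.IsReflection t₂) (hne : t₁ ≠ t₂) (hmul : t₁ * t₂ ∈ standardParabolic cs I) :
    t₁ ∈ standardParabolic cs I ∧ t₂ ∈ standardParabolic cs I := by
  obtain ⟨k, hk⟩ := exists_reflectionCocycle_mul_ne_zero cs h₁ h₂ hne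
  have hmem₂ : t₂ ∈ standardParabolic cs I := (mul_mem_cancel_left (zpow_mem hmul k)).mp
    (mem_standardParabolic_of_reflectionCocycle_ne_zero cs hmul hk)
  exact ⟨(mul_mem_cancel_right hmem₂).mp hmul, hmem₂⟩

end Dihedral

section Factorizations

variable {W : Type*} [Group W] {B : Type*} {M : CoxeterMatrix B} (cs : CoxeterSystem M W)

/-- The total length of the vertices, other than `x`, of the path that starts at `x` and multiplies
successively by the elements of a list on the right. -/
noncomputable def pathLength : W → List W → ℕ
  | _, [] => 0
  | x, t :: l => cs.length (x * t) + pathLength (x * t) l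

theorem pathLength_append (x : W) (l l' : List W) :
    pathLength cs x (l ++ l') = pathLength cs x l + pathLength cs (x * l.prod) l' := by
  induction l generalizing x with
  | nil => simp [pathLength]
  | cons t l ih => simp [pathLength, ih, add_assoc, mul_assoc]

theorem pathLength_replace_pair_lt {x a b a' b' : W} {l₁ l₂ : List W} (hmul : a' * b' = a * b)
    (hlt : cs.length (x * l₁.prod * a') < cs.length (x * l₁.prod * a)) :
    pathLength cs x (l₁ ++ a' :: b' :: l₂) < pathLength cs x (l₁ ++ a :: b :: l₂) := by
  simp only [pathLength_append, pathLength, mul_assoc _ a', mul_assoc _ a, hmul]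
  gcongr

/-- The path of partial products of `l`, starting at `1`, increases in length at every step. -/
def IsAscending (l : List W) : Prop :=
  ∀ l₁ t, l₁ ++ [t] <+: l → cs.length l₁.prod < cs.length (l₁.prod * t)

theorem exists_peak_of_not_isAscending {l : List W} (hrefl : ∀ t ∈ l, cs.IsReflection t)
    (hl : ¬IsAscending cs l) :
    ∃ l₁ t₁ t₂ l₂, l = l₁ ++ t₁ :: t₂ :: l₂ ∧ cs.length l₁.prod < cs.length (l₁.prod * t₁) ∧
      cs.length (l₁.prod * t₁ * t₂) < cs.length (l₁.prod * t₁) := by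
  contrapose! hl
  intro l₁
  induction l₁ using List.reverseRecOn with
  | nil =>
    rintro t ⟨l₂, rfl⟩
    simpa using (hrefl t (by simp)).odd_length.pos
  | append_singleton l₁ t₁ ih =>
    rintro t₂ ⟨l₂, rfl⟩
    have ht₂ : cs.IsReflection t₂ := hrefl t₂ (by simp)
    have hup := ih t₁ ⟨t₂ :: l₂, by simp⟩
    have hle := hl l₁ t₁ t₂ l₂ (by simp) hup
    rw [List.prod_append, List.prod_singleton]
    exact hle.lt_of_ne (ht₂.length_mul_left_ne _).symm

theorem IsAscending.mem_standardParabolic {I : Set B} {l : List W} (hasc : IsAscending cs l)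
    (hrefl : ∀ t ∈ l, cs.IsReflection t) (hprod : l.prod ∈ standardParabolic cs I) :
    ∀ t ∈ l, t ∈ standardParabolic cs I := by
  induction l using List.reverseRecOn with
  | nil => simp
  | append_singleton l t ih =>
    rw [List.prod_append, List.prod_singleton] at hprod
    have ht : t ∈ standardParabolic cs I := mem_standardParabolic_of_length_lt cs
      (hrefl t (by simp)) (hasc l t List.prefix_rfl) hprod
    have hl := ih (fun l₁ u h ↦ hasc l₁ u (h.trans (List.prefix_append l [t])))
      (fun u hu ↦ hrefl u (by simp [hu])) ((mul_mem_cancel_right ht).mp hprod)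
    simpa [or_imp, forall_and, ht] using hl

theorem mem_standardParabolic_of_mem_red {I : Set B} {w : W} (hw : w ∈ standardParabolic cs I)
    {l : List W} (hl : l ∈ Red {t | cs.IsReflection t} w) :
    ∀ t ∈ l, t ∈ standardParabolic cs I := by
  induction hn : pathLength cs 1 l using Nat.strong_induction_on generalizing l with
  | _ n ih =>
  by_cases hasc : IsAscending cs l
  · exact hasc.mem_standardParabolic cs hl.1 (hl.2.1 ▸ hw)
  obtain ⟨l₁, t₁, t₂, l₂, rfl, hup, hdown⟩ := exists_peak_of_not_isAscending cs hl.1 hasc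
  have h₁ : cs.IsReflection t₁ := hl.1 t₁ (by simp)
  have h₂ : cs.IsReflection t₂ := hl.1 t₂ (by simp)
  have hne : t₁ ≠ t₂ := by
    rintro rfl
    exact mul_ne_one_of_mem_red hl h₁.mul_self
  obtain ⟨k, hlt⟩ := exists_length_zpow_mul_lt_of_peak cs h₁ h₂ hne hup hdown
  set u₁ := (t₁ * t₂) ^ k * t₁
  set u₂ := (t₁ * t₂) ^ k * t₂
  have hmul : u₁ * u₂ = t₁ * t₂ :=
    zpow_mul_mul_zpow_mul_of_mul_self h₁.mul_self h₂.mul_self k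
  have hu₁ : cs.IsReflection u₁ := by
    simpa only [zpow_add_one_mul_of_mul_self h₂.mul_self] using
      isReflection_zpow_mul_s10 cs h₁ h₂ (k + 1)
  have hu₂ : cs.IsReflection u₂ := isReflection_zpow_mul_s10 cs h₁ h₂ k
  have hl' : l₁ ++ u₁ :: u₂ :: l₂ ∈ Red {t | cs.IsReflection t} w :=
    replace_pair_mem_red hl hu₁ hu₂ hmul
  have hmem := ih _ (hn ▸ pathLength_replace_pair_lt cs hmul (by simpa using hlt)) hl' rfl
  obtain ⟨ht₁, ht₂⟩ := mem_standardParabolic_of_mul_mem cs h₁ h₂ hne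
    (hmul ▸ mul_mem (hmem u₁ (by simp)) (hmem u₂ (by simp)))
  grind

end Factorizations

theorem red_eq_red_standard_parabolic_general
    {W : Type*} [Group W] {B : Type*} {M : CoxeterMatrix B} (cs : CoxeterSystem M W)
    (I : Set B) {w : W} (hw : w ∈ standardParabolic cs I) :
    Red {t | cs.IsReflection t} w = Red ({t | cs.IsReflection t} ∩ standardParabolic cs I) w :=
  red_eq_red_of_subset_s10 Set.inter_subset_left fun _ hl t ht ↦
    ⟨hl.1 t ht, mem_standardParabolic_of_mem_red cs hw hl t ht⟩

/-- Let `(W,S)` be a Coxeter system of finite rank with reflection set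
`T`, let `I ⊆ S`, and let `W_I = ⟨I⟩` be the corresponding standard parabolic subgroup,
with `T_I = T ∩ W_I`.  Then for every `w ∈ W_I` one has `Red_T(w) = Red_{T_I}(w)`:
every minimal-length factorization of `w` into reflections of `W` consists of
reflections lying in `W_I`. -/
theorem red_eq_red_standard_parabolic
    {W : Type*} [Group W] {B : Type*} [Finite B]
    (M : CoxeterMatrix B) (cs : CoxeterSystem M W)
    (T : Set W) (hT : T = {t | cs.IsReflection t})
    (I : Set B)
    (WI : Subgroup W) (hWI : WI = Subgroup.closure (cs.simple '' I))
    (TI : Set W) (hTI : TI = T ∩ ↑WI)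
    (w : W) (hw : w ∈ WI) :
    Red T w = Red TI w := by
  subst hT hWI hTI
  exact red_eq_red_standard_parabolic_general cs I hw
end
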